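/- arXiv:math/0109147 — 2 statements merged into one kernel-verified Lean document; each statement's English description precedes it below -/
import Mathlib

section
/- The quotient ring R_n = ℚ[x₁,...,x_n]/J_n, where J_n is the ideal generated by all non-constant quasi-symmetric polynomials in n variables, is a finite-dimensional ℚ-vector space of dimension at most the Catalan number C_n = (1/(n+1))·binom(2n,n). Moreover it is spanned by the images of the monomials x₁^{a₁}⋯x_n^{a_n} satisfying a₁+⋯+a_j < j for all j ∈ {1,...,n}. -/
open scoped Classical

/-- The monomial quasi-symmetric polynomial in `n` variables of a composition
`α = [α₁,…,α_k]` (list of positive parts):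
`M_α(x₁,…,x_n) = Σ_{i₁<⋯<i_k ≤ n} x_{i₁}^{α₁}⋯x_{i_k}^{α_k}`. -/
noncomputable def Mpoly (n : ℕ) (l : List ℕ) : MvPolynomial (Fin n) ℚ :=
  ∑ i : Fin l.length → Fin n,
    if StrictMono i then ∏ a : Fin l.length, MvPolynomial.X (i a) ^ l.get a else 0

/-- The ideal `J_n` of `ℚ[x₁,…,x_n]` generated by the non-constant quasi-symmetric
polynomials, i.e. generated by the `M_α` for nonempty compositions `α`. -/
noncomputable def Jn (n : ℕ) : Ideal (MvPolynomial (Fin n) ℚ) :=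
  Ideal.span {P | ∃ l : List ℕ, l ≠ [] ∧ (∀ x ∈ l, 0 < x) ∧ P = Mpoly n l}

/-!
For a list `u = [b₁, …, b_k]` let `F_u` be the fundamental quasi-symmetric polynomial of the
composition `(b₁ + 1, …, b_k + 1)`. Splitting off the first variable gives
`F_{0,u}(x, y) = F_{0,u}(y) + x F_u(y)` and `F_{b+1,u}(x, y) = F_{b+1,u}(y) + x F_{b,u}(x, y)`.
If `q F_u(x, y)` vanishes for all nonempty `u` with `d ≤ ∑ u`, then reading these recursions
backwards shows that `q x^c F_u(y)` vanishes modulo terms of lower degree in `x` as soon as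
`d < c + ∑ u`. Starting from `q = 1` and `d = 0` and absorbing the factors `x_j ^ a_j` into `q` one
at a time, the bound on `∑ u` after `j` steps is `j - (a₁ + ⋯ + a_j)`. At the first `j` where the
Catalan condition fails, `u = []` becomes admissible, and `F_[] = 1`: the monomial is congruent to a
combination of lexicographically smaller ones. Hence the Catalan monomials span, and the ballot
recursion counts them.
-/

section Quasisymmetric

variable {A : Type*} [CommSemiring A]

/-- The monomial quasi-symmetric polynomial `M_l` evaluated at the entries of a list, computed by
separating the terms that do not involve the first variable from those that do. -/
def monomialQuasisymm : List A → List ℕ → A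
  | _, [] => 1
  | [], _ :: _ => 0
  | x :: xs, a :: l => monomialQuasisymm xs (a :: l) + x ^ a * monomialQuasisymm xs l

/-- The fundamental quasi-symmetric polynomial evaluated at the entries of a list. The composition
is given by its parts decreased by one, so an entry `b` stands for the part `b + 1`; in this
encoding every list of naturals is a composition. -/
def fundamentalQuasisymm : List A → List ℕ → A
  | _, [] => 1
  | [], _ :: _ => 0
  | x :: xs, 0 :: u => fundamentalQuasisymm xs (0 :: u) + x * fundamentalQuasisymm xs u
  | x :: xs, (b + 1) :: u =>
    fundamentalQuasisymm xs ((b + 1) :: u) + x * fundamentalQuasisymm (x :: xs) (b :: u)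
termination_by xs u => (xs.length, u.sum)

theorem strictMono_fin_succ_iff {α : Type*} [Preorder α] {k : ℕ} {i : Fin (k + 1) → α} :
    StrictMono i ↔ (∀ j : Fin k, i 0 < i j.succ) ∧ StrictMono (i ∘ Fin.succ) := by
  simp [StrictMono, Fin.forall_fin_succ]

theorem sum_strictMono_fin_succ {M : Type*} [AddCommMonoid M] {k n : ℕ}
    (f : (Fin (k + 1) → Fin (n + 1)) → M) :
    ∑ i, (if StrictMono i then f i else 0) =
      ∑ i : Fin (k + 1) → Fin n, (if StrictMono i then f (Fin.succ ∘ i) else 0) +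
        ∑ i : Fin k → Fin n, (if StrictMono i then f (Fin.cons 0 (Fin.succ ∘ i)) else 0) := by
  let e : (Fin (k + 1) → Fin n) ⊕ (Fin k → Fin n) → Fin (k + 1) → Fin (n + 1) :=
    Sum.elim (Fin.succ ∘ ·) fun i => Fin.cons 0 (Fin.succ ∘ i)
  have strictMono_succ_comp {m : ℕ} (i : Fin m → Fin n) :
      StrictMono (Fin.succ ∘ i) ↔ StrictMono i :=
    ⟨fun h _ _ hab => Fin.succ_lt_succ_iff.1 (h hab), Fin.strictMono_succ.comp⟩
  have e_injective : Function.Injective e := by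
    refine Function.Injective.sumElim (Fin.succ_injective n).comp_left
      ((Fin.cons_right_injective (α := fun _ => Fin (n + 1)) 0).comp
        (Fin.succ_injective n).comp_left) fun i j h => Fin.succ_ne_zero (i 0) (congrFun h 0)
  have mem_range_e {i : Fin (k + 1) → Fin (n + 1)} (hi : StrictMono i) : i ∈ Set.range e := by
    have exists_succ_comp_eq {m : ℕ} (g : Fin m → Fin (n + 1)) (hg : ∀ j, g j ≠ 0) :
        ∃ g' : Fin m → Fin n, Fin.succ ∘ g' = g :=
      ⟨fun j => (g j).pred (hg j), funext fun j => Fin.succ_pred _ _⟩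
    obtain ⟨hlt, -⟩ := strictMono_fin_succ_iff.1 hi
    by_cases h0 : i 0 = 0
    · obtain ⟨g, hg⟩ := exists_succ_comp_eq (i ∘ Fin.succ) fun j => Fin.ne_zero_of_lt (hlt j)
      exact ⟨Sum.inr g, by simp only [e, Sum.elim_inr, hg, ← h0]; exact Fin.cons_self_tail i⟩
    · obtain ⟨g, hg⟩ := exists_succ_comp_eq i (Fin.cases h0 fun j => Fin.ne_zero_of_lt (hlt j))
      exact ⟨Sum.inl g, hg⟩
  rw [← Fintype.sum_of_injective e e_injective (fun s => if StrictMono (e s) then f (e s) else 0)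
    _ (fun i hi => if_neg (mt mem_range_e hi)) fun _ => rfl, Fintype.sum_sum_type]
  simp [e, strictMono_fin_succ_iff (i := Fin.cons _ _), strictMono_succ_comp]

theorem sum_strictMono_prod_pow_eq_monomialQuasisymm {n : ℕ} (x : Fin n → A) (l : List ℕ) :
    (∑ i : Fin l.length → Fin n, if StrictMono i then ∏ a, x (i a) ^ l.get a else 0) =
      monomialQuasisymm (List.ofFn x) l := by
  induction n generalizing l with
  | zero =>
    cases l with
    | nil => simp [monomialQuasisymm, Subsingleton.strictMono]
    | cons a l => simp [monomialQuasisymm]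
  | succ n ih =>
    cases l with
    | nil => simp [monomialQuasisymm, Subsingleton.strictMono]
    | cons a l =>
      rw [List.ofFn_succ, monomialQuasisymm, ← ih, ← ih, Finset.mul_sum]
      refine (sum_strictMono_fin_succ _).trans (congrArg₂ _ rfl ?_)
      refine Finset.sum_congr rfl fun i _ => ?_
      simp [Fin.prod_univ_succ]

theorem map_monomialQuasisymm {B F : Type*} [CommSemiring B] [FunLike F A B] [RingHomClass F A B]
    (f : F) (xs : List A) (l : List ℕ) :
    f (monomialQuasisymm xs l) = monomialQuasisymm (xs.map f) l := by
  induction xs, l using monomialQuasisymm.induct with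
  | case1 => simp [monomialQuasisymm]
  | case2 => simp [monomialQuasisymm]
  | case3 x xs a l ih₁ ih₂ => simp [monomialQuasisymm, ih₁, ih₂]

/-- The compositions refining the composition `(b₁ + 1, …, b_k + 1)` encoded by `[b₁, …, b_k]`. The
refinements themselves are listed with their actual, positive parts. -/
def refinements : List ℕ → List (List ℕ)
  | [] => [[]]
  | 0 :: u => (refinements u).map (1 :: ·)
  | (b + 1) :: u =>
    (refinements (b :: u)).map (1 :: ·) ++ (refinements (b :: u)).map (List.modifyHead (· + 1))
termination_by u => (u.length, u.sum)

theorem ne_nil_of_mem_refinements {u l : List ℕ} (hu : u ≠ []) (hl : l ∈ refinements u) :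
    l ≠ [] := by
  induction u using refinements.induct generalizing l with
  | case1 => exact absurd rfl hu
  | case2 u =>
    obtain ⟨l, -, rfl⟩ := List.mem_map.1 (by simpa only [refinements] using hl)
    exact List.cons_ne_nil _ _
  | case3 b u ih =>
    rw [refinements, List.mem_append, List.mem_map, List.mem_map] at hl
    obtain ⟨l, -, rfl⟩ | ⟨l, hl, rfl⟩ := hl
    · exact List.cons_ne_nil _ _
    · simpa using ih (List.cons_ne_nil _ _) hl

theorem pos_of_mem_refinements {u l : List ℕ} (hl : l ∈ refinements u) : ∀ a ∈ l, 0 < a := by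
  induction u using refinements.induct generalizing l with
  | case1 => simp_all [refinements]
  | case2 u ih =>
    rw [refinements, List.mem_map] at hl
    obtain ⟨l, hl, rfl⟩ := hl
    simpa using ih hl
  | case3 b u ih =>
    rw [refinements, List.mem_append, List.mem_map, List.mem_map] at hl
    obtain ⟨l, hl, rfl⟩ | ⟨l, hl, rfl⟩ := hl
    · simpa using ih hl
    · cases l with
      | nil => simp
      | cons a l => simpa using fun c hc => ih hl c (List.mem_cons_of_mem a hc)

theorem monomialQuasisymm_one_cons_add_modifyHead (x : A) (xs : List A) {l : List ℕ}
    (hl : l ≠ []) :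
    monomialQuasisymm (x :: xs) (1 :: l) + monomialQuasisymm (x :: xs) (l.modifyHead (· + 1)) =
      monomialQuasisymm xs (1 :: l) + monomialQuasisymm xs (l.modifyHead (· + 1)) +
        x * monomialQuasisymm (x :: xs) l := by
  obtain ⟨a, l, rfl⟩ := List.exists_cons_of_ne_nil hl
  simp only [List.modifyHead_cons, monomialQuasisymm]
  ring

theorem fundamentalQuasisymm_eq_sum_refinements (xs : List A) (u : List ℕ) :
    fundamentalQuasisymm xs u = ((refinements u).map (monomialQuasisymm xs)).sum := by
  induction xs, u using fundamentalQuasisymm.induct with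
  | case1 => simp [fundamentalQuasisymm, refinements, monomialQuasisymm]
  | case2 b u =>
    rw [fundamentalQuasisymm]
    refine (List.sum_eq_zero fun y hy => ?_).symm
    obtain ⟨l, hl, rfl⟩ := List.mem_map.1 hy
    obtain ⟨a, l, rfl⟩ :=
      List.exists_cons_of_ne_nil (ne_nil_of_mem_refinements (List.cons_ne_nil b u) hl)
    rw [monomialQuasisymm]
  | case3 x xs u ih₁ ih₂ =>
    rw [fundamentalQuasisymm, ih₁, ih₂]
    simp [refinements, Function.comp_def, monomialQuasisymm, List.sum_map_add,
      List.sum_map_mul_left]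
  | case4 x xs b u ih₁ ih₂ =>
    rw [fundamentalQuasisymm, ih₁, ih₂]
    simp only [refinements, List.map_append, List.map_map, List.sum_append, Function.comp_def,
      ← List.sum_map_add, ← List.sum_map_mul_left]
    refine congrArg List.sum (List.map_congr_left fun l hl => ?_)
    exact (monomialQuasisymm_one_cons_add_modifyHead x xs
      (ne_nil_of_mem_refinements (List.cons_ne_nil b u) hl)).symm

theorem fundamentalQuasisymm_eq_zero {xs : List A}
    (h : ∀ l : List ℕ, l ≠ [] → (∀ a ∈ l, 0 < a) → monomialQuasisymm xs l = 0)
    {u : List ℕ} (hu : u ≠ []) : fundamentalQuasisymm xs u = 0 := by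
  rw [fundamentalQuasisymm_eq_sum_refinements]
  refine List.sum_eq_zero fun y hy => ?_
  obtain ⟨l, hl, rfl⟩ := List.mem_map.1 hy
  exact h l (ne_nil_of_mem_refinements hu hl) (pos_of_mem_refinements hl)

theorem fundamentalQuasisymm_mem {S : Type*} [SetLike S A] [SubsemiringClass S A] {s : S}
    {xs : List A} (h : ∀ x ∈ xs, x ∈ s) (u : List ℕ) : fundamentalQuasisymm xs u ∈ s := by
  induction xs, u using fundamentalQuasisymm.induct with
  | case1 => simp [fundamentalQuasisymm]
  | case2 => simp [fundamentalQuasisymm]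
  | case3 x xs u ih₁ ih₂ =>
    rw [List.forall_mem_cons] at h
    rw [fundamentalQuasisymm]
    exact add_mem (ih₁ h.2) (mul_mem h.1 (ih₂ h.2))
  | case4 x xs b u ih₁ ih₂ =>
    rw [fundamentalQuasisymm]
    exact add_mem (ih₁ (List.forall_mem_cons.1 h).2) (mul_mem (h x List.mem_cons_self) (ih₂ h))

end Quasisymmetric

section Catalan

/-- The exponent vectors of type `k`-Catalan, those with `a₁ + ⋯ + a_j < j + k` for `1 ≤ j ≤ n`. The
spanning monomials are those with `k = 0`; larger `k` arise by deleting leading entries. -/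
def IsCatalan (k : ℕ) {n : ℕ} (a : Fin n → ℕ) : Prop :=
  ∀ j, 1 ≤ j → j ≤ n → (∑ i ∈ Finset.univ.filter fun i : Fin n => (i : ℕ) < j, a i) < j + k

theorem isCatalan_fin_zero (k : ℕ) (a : Fin 0 → ℕ) : IsCatalan k a := fun j hj hj' => by omega

theorem isCatalan_cons_iff {k n c : ℕ} {a : Fin n → ℕ} :
    IsCatalan k (Fin.cons c a : Fin (n + 1) → ℕ) ↔ c ≤ k ∧ IsCatalan (k + 1 - c) a := by
  have sum_cons (j : ℕ) :
      ∑ i ∈ Finset.univ.filter fun i : Fin (n + 1) => (i : ℕ) < j + 1,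
        (Fin.cons c a : Fin (n + 1) → ℕ) i =
        c + ∑ i ∈ Finset.univ.filter fun i : Fin n => (i : ℕ) < j, a i := by
    simp [Finset.sum_filter, Fin.sum_univ_succ]
  constructor
  · intro h
    have hc : c ≤ k := by
      have := sum_cons 0 ▸ h 1 le_rfl (by omega)
      simpa [Nat.lt_one_add_iff] using this
    refine ⟨hc, fun j _ hj => ?_⟩
    have := sum_cons j ▸ h (j + 1) (by omega) (by omega)
    omega
  · rintro ⟨hc, h⟩ j hj hjn
    obtain ⟨j, rfl⟩ := Nat.exists_eq_add_of_le' hj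
    rw [sum_cons]
    rcases j.eq_zero_or_pos with rfl | hj
    · simpa [Nat.lt_one_add_iff] using hc
    · have := h j hj (by omega)
      omega

/-- Prepends `k - m` to a type `(m + 1)`-Catalan vector; the resulting type `k`-Catalan vectors are
indexed by the slack `m + 1` left after their first entry. -/
def IsCatalan.cons {n k : ℕ} (s : (m : Fin (k + 1)) × {a : Fin n → ℕ // IsCatalan (m + 1) a}) :
    {a : Fin (n + 1) → ℕ // IsCatalan k a} :=
  ⟨Fin.cons (k - s.1) s.2.1, isCatalan_cons_iff.2 ⟨Nat.sub_le _ _, by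
    simpa only [show k + 1 - (k - s.1) = s.1 + 1 by omega] using s.2.2⟩⟩

theorem IsCatalan.cons_bijective (n k : ℕ) :
    Function.Bijective (IsCatalan.cons (n := n) (k := k)) := by
  constructor
  · rintro ⟨m, a, ha⟩ ⟨m', a', ha'⟩ h
    have hval : (Fin.cons (k - m : ℕ) a : Fin (n + 1) → ℕ) = Fin.cons (k - m' : ℕ) a' :=
      congrArg Subtype.val h
    obtain ⟨hm, rfl⟩ := Fin.cons_inj.1 hval
    obtain rfl : m = m' := by omega
    rfl
  · rintro ⟨a, ha⟩
    induction a using Fin.consCases with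
    | cons c a =>
      obtain ⟨hc, ha'⟩ := isCatalan_cons_iff.1 ha
      refine ⟨⟨⟨k - c, by omega⟩, a, by simpa only [Nat.sub_add_comm hc] using ha'⟩,
        Subtype.ext ?_⟩
      simp only [IsCatalan.cons, Nat.sub_sub_self hc]

instance finite_isCatalan (n k : ℕ) : Finite {a : Fin n → ℕ // IsCatalan k a} := by
  induction n generalizing k with
  | zero => infer_instance
  | succ n ih => exact Finite.of_surjective _ (IsCatalan.cons_bijective n k).surjective

theorem card_isCatalan_zero (k : ℕ) : Nat.card {a : Fin 0 → ℕ // IsCatalan k a} = 1 := by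
  simp [isCatalan_fin_zero]

theorem card_isCatalan_succ (n k : ℕ) :
    Nat.card {a : Fin (n + 1) → ℕ // IsCatalan k a} =
      ∑ m ∈ Finset.range (k + 1), Nat.card {a : Fin n → ℕ // IsCatalan (m + 1) a} := by
  rw [← Nat.card_eq_of_bijective _ (IsCatalan.cons_bijective n k), Nat.card_sigma,
    Finset.sum_range (fun m => Nat.card {a : Fin n → ℕ // IsCatalan (m + 1) a})]

theorem card_isCatalan_add_choose (n k : ℕ) :
    Nat.card {a : Fin n → ℕ // IsCatalan k a} + (2 * n + k).choose (n + k + 1) =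
      (2 * n + k).choose (n + k) := by
  induction n generalizing k with
  | zero => rw [card_isCatalan_zero]; simp
  | succ n ih =>
    induction k with
    | zero =>
      have hcard := ih 1
      have symm := Nat.choose_symm_half n
      have pascal₁ := Nat.choose_succ_succ' (2 * n + 1) n
      have pascal₂ := Nat.choose_succ_succ' (2 * n + 1) (n + 1)
      rw [card_isCatalan_succ, Finset.sum_range_one]
      grind
    | succ k ihk =>
      have hcard := ih (k + 2)
      have pascal₁ := Nat.choose_succ_succ' (2 * n + k + 2) (n + k + 1)
      have pascal₂ := Nat.choose_succ_succ' (2 * n + k + 2) (n + k + 2)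
      rw [card_isCatalan_succ] at ihk ⊢
      rw [Finset.sum_range_succ]
      grind

theorem card_isCatalan_eq_catalan (n : ℕ) :
    Nat.card {a : Fin n → ℕ // IsCatalan 0 a} = catalan n := by
  have hcard : Nat.card {a : Fin n → ℕ // IsCatalan 0 a} + (2 * n).choose (n + 1) =
      (2 * n).choose n := card_isCatalan_add_choose n 0
  have hchoose : (2 * n).choose (n + 1) * (n + 1) = (2 * n).choose n * n := by
    rw [Nat.choose_succ_right_eq, two_mul, Nat.add_sub_cancel]
  have hcatalan : (n + 1) * catalan n = (2 * n).choose n := succ_mul_catalan_eq_centralBinom n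
  refine Nat.eq_of_mul_eq_mul_left n.succ_pos ?_
  linarith [congrArg ((n + 1) * ·) hcard]

end Catalan

section FirstVariable

variable {A S : Type*} [CommRing A] [SetLike S A] [AddSubgroupClass S A] {V : S}

theorem mul_fundamentalQuasisymm_tail_mem {q x : A} {xs : List A} {d : ℕ}
    (hV : ∀ f ∈ V, x * f ∈ V)
    (h : ∀ u ≠ [], d ≤ u.sum → q * fundamentalQuasisymm (x :: xs) u ∈ V)
    {u : List ℕ} (hu : d < u.sum) : q * fundamentalQuasisymm xs u ∈ V := by
  induction u with
  | nil => simp at hu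
  | cons b u ih =>
    rw [List.sum_cons] at hu
    have hbu := h (b :: u) (List.cons_ne_nil _ _) (by rw [List.sum_cons]; omega)
    cases b with
    | zero =>
      convert sub_mem hbu (hV _ (ih (by omega))) using 1
      rw [fundamentalQuasisymm]
      ring
    | succ b =>
      have hpred := h (b :: u) (List.cons_ne_nil _ _) (by rw [List.sum_cons]; omega)
      convert sub_mem hbu (hV _ hpred) using 1
      rw [fundamentalQuasisymm]
      ring

theorem mul_pow_mul_fundamentalQuasisymm_mem {q x : A} {xs : List A} {c : ℕ}
    {u : List ℕ} (hlow : ∀ c' ≤ c, ∀ w, q * x ^ c' * fundamentalQuasisymm xs w ∈ V)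
    (h : q * fundamentalQuasisymm (x :: xs) (c :: u) ∈ V) :
    q * x ^ (c + 1) * fundamentalQuasisymm xs u ∈ V := by
  induction c generalizing q with
  | zero =>
    convert sub_mem h (hlow 0 le_rfl (0 :: u)) using 1
    rw [fundamentalQuasisymm]
    ring
  | succ c ih =>
    have hqx : q * x * fundamentalQuasisymm (x :: xs) (c :: u) ∈ V := by
      convert sub_mem h (hlow 0 (Nat.zero_le _) ((c + 1) :: u)) using 1
      rw [fundamentalQuasisymm]
      ring
    convert ih (fun c' hc' w => ?_) hqx using 1
    · ring
    · convert hlow (c' + 1) (by omega) w using 1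
      ring

end FirstVariable

section DivAdjoin

variable {R A : Type*} [CommSemiring R] [CommSemiring A] [Algebra R A]

theorem toSubmodule_adjoin_range_eq_span {ι : Type*} [Fintype ι] (x : ι → A) :
    Subalgebra.toSubmodule (Algebra.adjoin R (Set.range x)) =
      Submodule.span R (Set.range fun a : ι → ℕ => ∏ i, x i ^ a i) := by
  refine le_antisymm ?_ (Submodule.span_le.2 ?_)
  · intro f hf
    rw [Subalgebra.mem_toSubmodule, Algebra.adjoin_range_eq_range_aeval] at hf
    obtain ⟨p, rfl⟩ := hf
    rw [AlgHom.toRingHom_eq_coe, RingHom.coe_coe, MvPolynomial.aeval_def, MvPolynomial.eval₂_eq']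
    refine sum_mem fun m _ => ?_
    rw [← Algebra.smul_def]
    exact Submodule.smul_mem _ _ (Submodule.subset_span ⟨m, rfl⟩)
  · rintro _ ⟨a, rfl⟩
    exact Subalgebra.prod_mem _ fun i _ => pow_mem (Algebra.subset_adjoin (Set.mem_range_self i)) _

theorem mem_div_adjoin_range_iff {ι : Type*} [Fintype ι] {x : ι → A} {W : Submodule R A} {f : A} :
    f ∈ W / Subalgebra.toSubmodule (Algebra.adjoin R (Set.range x)) ↔
      ∀ a : ι → ℕ, f * ∏ i, x i ^ a i ∈ W := by
  have mem_div_iff_le_comap (V : Submodule R A) : f ∈ W / V ↔ V ≤ W.comap (LinearMap.mulLeft R f) :=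
    Iff.rfl
  rw [mem_div_iff_le_comap, toSubmodule_adjoin_range_eq_span, Submodule.span_le,
    Set.range_subset_iff]
  rfl

theorem mul_mem_div_adjoin {W : Submodule R A} {s : Set A} {f g : A}
    (hf : f ∈ W / Subalgebra.toSubmodule (Algebra.adjoin R s)) (hg : g ∈ Algebra.adjoin R s) :
    f * g ∈ W / Subalgebra.toSubmodule (Algebra.adjoin R s) := fun h hh => by
  rw [mul_assoc]
  exact hf _ ((Algebra.adjoin R s).mul_mem hg hh)

end DivAdjoin

section Spanning

variable {R A : Type*} [CommRing R] [CommRing A] [Algebra R A]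

theorem mul_pow_mul_fundamentalQuasisymm_tail_mem_div {W : Submodule R A} {n : ℕ}
    {x : Fin (n + 1) → A} {q : A} {c d : ℕ}
    (hlow : ∀ e < c, q * x 0 ^ e ∈
      W / Subalgebra.toSubmodule (Algebra.adjoin R (Set.range (Fin.tail x))))
    (hfund : ∀ u ≠ [], d ≤ u.sum → q * fundamentalQuasisymm (List.ofFn x) u ∈
      W / Subalgebra.toSubmodule (Algebra.adjoin R (Set.range x)))
    {u : List ℕ} (hu : d < c + u.sum) :
    q * x 0 ^ c * fundamentalQuasisymm (List.ofFn (Fin.tail x)) u ∈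
      W / Subalgebra.toSubmodule (Algebra.adjoin R (Set.range (Fin.tail x))) := by
  have div_le_div : W / Subalgebra.toSubmodule (Algebra.adjoin R (Set.range x)) ≤
      W / Subalgebra.toSubmodule (Algebra.adjoin R (Set.range (Fin.tail x))) :=
    fun f hf g hg => hf g (Algebra.adjoin_mono (Set.range_comp_subset_range Fin.succ x) hg)
  rw [List.ofFn_succ] at hfund
  cases c with
  | zero =>
    rw [pow_zero, mul_one]
    refine div_le_div (mul_fundamentalQuasisymm_tail_mem (fun f hf => ?_) hfund (by omega))
    rw [mul_comm]
    exact mul_mem_div_adjoin hf (Algebra.subset_adjoin (Set.mem_range_self 0))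
  | succ c =>
    refine mul_pow_mul_fundamentalQuasisymm_mem (fun e he w => ?_)
      (div_le_div (hfund (c :: u) (List.cons_ne_nil _ _) (by rw [List.sum_cons]; omega)))
    refine mul_mem_div_adjoin (hlow e (by omega)) (fundamentalQuasisymm_mem ?_ w)
    exact List.forall_mem_ofFn_iff.2 fun i => Algebra.subset_adjoin (Set.mem_range_self i)

/-- Here `q` is the part of the monomial that has already been read and `d` is the slack it leaves.
`f ∈ W / …` says that all multiples of `f` by polynomials in `x` lie in `W`. -/
theorem mul_prod_pow_mem_of_not_isCatalan {W : Submodule R A} {n : ℕ} {x : Fin n → A}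
    {a : Fin n → ℕ} {q : A} {d : ℕ}
    (hlow : ∀ b, toLex b < toLex a → q * ∏ i, x i ^ b i ∈ W)
    (hfund : ∀ u ≠ [], d ≤ u.sum → q * fundamentalQuasisymm (List.ofFn x) u ∈
      W / Subalgebra.toSubmodule (Algebra.adjoin R (Set.range x)))
    (ha : ¬ IsCatalan d a) : q * ∏ i, x i ^ a i ∈ W := by
  induction n generalizing q d with
  | zero => exact absurd (isCatalan_fin_zero d a) ha
  | succ n ih =>
    induction a using Fin.consCases with | cons c a
    have mul_prod_cons (e : ℕ) (b : Fin n → ℕ) :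
        q * ∏ i, x i ^ (Fin.cons e b : Fin (n + 1) → ℕ) i =
          q * x 0 ^ e * ∏ i, Fin.tail x i ^ b i := by
      simp [Fin.prod_univ_succ, mul_assoc, Fin.tail]
    have hlow_head (e : ℕ) (he : e < c) : q * x 0 ^ e ∈
        W / Subalgebra.toSubmodule (Algebra.adjoin R (Set.range (Fin.tail x))) :=
      mem_div_adjoin_range_iff.2 fun b =>
        mul_prod_cons e b ▸ hlow _ ((Fin.pi_lex_lt_cons_cons _).2 (Or.inl he))
    have hfund_tail {u : List ℕ} (hu : d < c + u.sum) :=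
      mul_pow_mul_fundamentalQuasisymm_tail_mem_div hlow_head hfund hu
    rw [mul_prod_cons]
    rcases lt_or_ge d c with hdc | hcd
    · refine mem_div_adjoin_range_iff.1 ?_ a
      simpa only [fundamentalQuasisymm, mul_one] using hfund_tail (u := []) (by simpa using hdc)
    · refine ih (d := d + 1 - c) (fun b hb => ?_) (fun u _ hu => hfund_tail (by omega)) fun ha' =>
        ha (isCatalan_cons_iff.2 ⟨hcd, ha'⟩)
      exact mul_prod_cons c b ▸ hlow _ ((Fin.pi_lex_lt_cons_cons _).2 (Or.inr ⟨rfl, hb⟩))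

theorem prod_pow_mem_span_isCatalan {n : ℕ} {x : Fin n → A}
    (hx : ∀ u ≠ [], fundamentalQuasisymm (List.ofFn x) u = 0) (a : Fin n → ℕ) :
    ∏ i, x i ^ a i ∈ Submodule.span R {m | ∃ b, IsCatalan 0 b ∧ m = ∏ i, x i ^ b i} := by
  induction h : toLex a using WellFoundedLT.induction generalizing a with
  | ind _ ih =>
    subst h
    by_cases ha : IsCatalan 0 a
    · exact Submodule.subset_span ⟨a, ha, rfl⟩
    · rw [← one_mul (∏ i, x i ^ a i)]
      refine mul_prod_pow_mem_of_not_isCatalan (fun b hb => ?_) (fun u hu _ => ?_) ha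
      · rw [one_mul]
        exact ih (toLex b) hb b rfl
      · rw [hx u hu, mul_zero]
        exact zero_mem _

theorem Rn_dim_le_catalan_general [Nontrivial R] {n : ℕ} {x : Fin n → A}
    (hx : ∀ l : List ℕ, l ≠ [] → (∀ b ∈ l, 0 < b) → monomialQuasisymm (List.ofFn x) l = 0)
    (hgen : Algebra.adjoin R (Set.range x) = ⊤) :
    Module.Finite R A ∧ Module.finrank R A ≤ catalan n ∧
      Submodule.span R {m | ∃ a, IsCatalan 0 a ∧ m = ∏ i, x i ^ a i} = ⊤ := by
  have hspan : Submodule.span R {m | ∃ a, IsCatalan 0 a ∧ m = ∏ i, x i ^ a i} = ⊤ := by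
    rw [eq_top_iff, ← Algebra.top_toSubmodule, ← hgen, toSubmodule_adjoin_range_eq_span,
      Submodule.span_le]
    rintro _ ⟨a, rfl⟩
    exact prod_pow_mem_span_isCatalan (fun u hu => fundamentalQuasisymm_eq_zero hx hu) a
  let b (a : {a : Fin n → ℕ // IsCatalan 0 a}) : A := ∏ i, x i ^ a.1 i
  have range_b : Set.range b = {m | ∃ a, IsCatalan 0 a ∧ m = ∏ i, x i ^ a i} := by
    ext m
    simp [b, eq_comm]
  have := Fintype.ofFinite {a : Fin n → ℕ // IsCatalan 0 a}
  refine ⟨⟨⟨(Set.finite_range b).toFinset, by rw [Set.Finite.coe_toFinset, range_b, hspan]⟩⟩, ?_,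
    hspan⟩
  rw [← finrank_top, ← hspan, ← range_b, ← card_isCatalan_eq_catalan, Nat.card_eq_fintype_card]
  exact finrank_range_le_card b

end Spanning

section Quotient

theorem Mpoly_eq_monomialQuasisymm (n : ℕ) (l : List ℕ) :
    Mpoly n l = monomialQuasisymm (List.ofFn MvPolynomial.X) l :=
  sum_strictMono_prod_pow_eq_monomialQuasisymm _ l

theorem monomialQuasisymm_mk_X_eq_zero {n : ℕ} {l : List ℕ} (hl : l ≠ []) (hpos : ∀ b ∈ l, 0 < b) :
    monomialQuasisymm (List.ofFn fun i : Fin n => Ideal.Quotient.mk (Jn n) (MvPolynomial.X i)) l =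
      0 := by
  rw [← Function.comp_def, ← List.map_ofFn, ← map_monomialQuasisymm, ← Mpoly_eq_monomialQuasisymm,
    Ideal.Quotient.eq_zero_iff_mem]
  exact Ideal.subset_span ⟨l, hl, hpos, rfl⟩

theorem adjoin_range_mk_X_eq_top {σ R : Type*} [CommRing R] (I : Ideal (MvPolynomial σ R)) :
    Algebra.adjoin R (Set.range fun i => Ideal.Quotient.mk I (MvPolynomial.X i)) = ⊤ := by
  have hsurj : Function.Surjective (Ideal.Quotient.mkₐ R I) := Ideal.Quotient.mkₐ_surjective R I
  rw [← Function.comp_def, Set.range_comp, ← (AlgHom.range_eq_top _).2 hsurj, ← Algebra.map_top,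
    ← MvPolynomial.adjoin_range_X, AlgHom.map_adjoin]
  rfl

theorem image_mk_setOf_prod_X_pow {σ R : Type*} [Fintype σ] [CommRing R]
    (I : Ideal (MvPolynomial σ R)) (P : (σ → ℕ) → Prop) :
    Ideal.Quotient.mk I '' {m | ∃ a, P a ∧ m = ∏ i, MvPolynomial.X i ^ a i} =
      {m | ∃ a, P a ∧ m = ∏ i, Ideal.Quotient.mk I (MvPolynomial.X i) ^ a i} := by
  ext m
  simp [eq_comm]

end Quotient

/-- The quotient `R_n = ℚ[x₁,…,x_n]/J_n` is a finite-dimensional `ℚ`-vector space of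
dimension at most the Catalan number `C_n = (1/(n+1))·binom(2n,n)`; moreover it is
spanned by the images of the monomials `x₁^{a₁}⋯x_n^{a_n}` with `a₁+⋯+a_j < j` for all
`j ∈ {1,…,n}` (the monomials of type 0-Catalan). -/
theorem Rn_dim_le_catalan (n : ℕ) (hn : 1 ≤ n) :
    FiniteDimensional ℚ (MvPolynomial (Fin n) ℚ ⧸ Jn n) ∧
    Module.finrank ℚ (MvPolynomial (Fin n) ℚ ⧸ Jn n) ≤ catalan n ∧
    (n + 1) * catalan n = (2 * n).choose n ∧
    Submodule.span ℚ
        (Ideal.Quotient.mk (Jn n) ''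
          {m : MvPolynomial (Fin n) ℚ | ∃ a : Fin n → ℕ,
            (∀ j, 1 ≤ j → j ≤ n →
              (∑ i ∈ Finset.univ.filter fun i : Fin n => (i : ℕ) < j, a i) < j) ∧
            m = ∏ i, MvPolynomial.X i ^ a i}) = ⊤ := by
  obtain ⟨hfinite, hrank, hspan⟩ := Rn_dim_le_catalan_general
    (fun _ hl hpos => monomialQuasisymm_mk_X_eq_zero hl hpos) (adjoin_range_mk_X_eq_top (Jn n))
  refine ⟨hfinite, hrank, succ_mul_catalan_eq_centralBinom n, ?_⟩
  exact (congrArg _ (image_mk_setOf_prod_X_pow (Jn n) (IsCatalan 0))).trans hspan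
end

section
/- More generally, for every e ≥ 0 and n ≥ 1, dim_ℚ R_n^(e) ≤ C_n^(e), where R_n^(e) = ℚ[x₁,...,x_n]/J_n^(e), J_n^(e) is generated by the F_α(x₁,...,x_n) with α admitting a prefix π satisfying sum(π) - length(π) ≥ e, and C_n^(e) is the number of lattice paths from (0,0) to (n+e,n) staying weakly above the line y = x - e. -/
open scoped Classical

/-- Descent set of a composition (list of positive parts): partial sums. -/
def descents (l : List ℕ) : Finset ℕ :=
  (Finset.Ioo 0 l.length).image (fun k => (l.take k).sum)

/-- The fundamental quasi-symmetric polynomial in `n` variables of degree `d` with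
descent set `D`, obtained from the fundamental quasi-symmetric function by setting
`x_i = 0` for `i > n`: the sum of `x_{j₁}⋯x_{j_d}` over weakly increasing
`j : Fin d → Fin n` with strict increase at the positions of `D`. -/
noncomputable def Fpoly (n d : ℕ) (D : Finset ℕ) : MvPolynomial (Fin n) ℚ :=
  ∑ j : Fin d → Fin n,
    if (Monotone j ∧
        ∀ a b : Fin d, (a : ℕ) + 1 = (b : ℕ) → (a : ℕ) + 1 ∈ D → j a < j b) then
      ∏ i, MvPolynomial.X (j i)
    else 0

/-- The ideal `J_n^(e)` of `ℚ[x₁,…,x_n]` generated by the `F_α(x₁,…,x_n)` with `α`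
admitting a (nonempty) prefix `π` satisfying `sum(π) - length(π) ≥ e`. -/
noncomputable def Jne (n e : ℕ) : Ideal (MvPolynomial (Fin n) ℚ) :=
  Ideal.span {P | ∃ l : List ℕ, (∀ x ∈ l, 0 < x) ∧
    (∃ k : ℕ, 0 < k ∧ k + e ≤ (l.take k).sum) ∧ P = Fpoly n l.sum (descents l)}

/-!
Following Aval, Bergeron and Bergeron, every exponent sequence `μ` gets a polynomial `G_μ` that is
monic with lexicographic leading monomial `x^μ` and that lies in `J_n^(e)` whenever `μ` is not of
type `e`-Catalan. Dividing by these polynomials shows that the monomials of type `e`-Catalan span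
the quotient, and the sequences of type `e`-Catalan inject into the lattice paths: the `i`-th
exponent is the number of east steps between two consecutive north steps.

Write `F_s(b)` for the fundamental polynomial in the variables `x_s, x_{s+1}, …` of the composition
whose parts are the entries of `b` plus one. Splitting off the words that start with `x_s` gives
`F_s(0, b) = x_s F_{s+1}(b) + F_{s+1}(0, b)` and
`F_s(c + 1, b) = x_s F_s(c, b) + F_{s+1}(c + 1, b)`.
Hence `F_{s+1}` is a linear function of the family `F_s`, and reading `μ` from the left defines
`G_μ` as a linear function of the family `F_0`: an entry `0` passes from `F_s` to `F_{s+1}`, an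
entry `a + 1` fixes the next part of the composition to be `a + 1`.
-/

namespace QuasisymmetricQuotient

open MvPolynomial
open scoped MonomialOrder

section Descents

lemma mem_descents_cons {a k : ℕ} {l : List ℕ} :
    k ∈ descents (a :: l) ↔ l ≠ [] ∧ k = a ∨ ∃ k' ∈ descents l, k = a + k' := by
  simp only [descents, Finset.mem_image, Finset.mem_Ioo, List.length_cons, ← List.length_pos_iff]
  constructor
  · rintro ⟨i, ⟨hi, hil⟩, rfl⟩
    obtain ⟨i, rfl⟩ := Nat.exists_eq_add_of_lt hi
    rcases i.eq_zero_or_pos with rfl | hi'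
    · exact Or.inl ⟨by omega, by simp⟩
    · exact Or.inr ⟨_, ⟨i, ⟨hi', by omega⟩, rfl⟩, by simp⟩
  · rintro (⟨hl, rfl⟩ | ⟨_, ⟨i, ⟨hi, hil⟩, rfl⟩, rfl⟩)
    · exact ⟨1, by omega, by simp⟩
    · exact ⟨i + 1, by omega, by simp⟩

/-- The positions of a word, counted from `0`, after which a strict increase is required in the
fundamental quasi-symmetric polynomial of the composition `l`. -/
def strictPositions (l : List ℕ) : Set ℕ := {k | k + 1 ∈ descents l}

lemma zero_mem_strictPositions_one_cons {l : List ℕ} :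
    0 ∈ strictPositions (1 :: l) ↔ l ≠ [] := by
  simp only [strictPositions, Set.mem_ofPred_eq, mem_descents_cons]
  grind [descents]

lemma preimage_succ_strictPositions_one_cons (l : List ℕ) :
    (· + 1) ⁻¹' strictPositions (1 :: l) = strictPositions l := by
  ext k
  simp only [strictPositions, Set.mem_preimage, Set.mem_ofPred_eq, mem_descents_cons]
  grind

lemma zero_notMem_strictPositions_cons (c : ℕ) (l : List ℕ) :
    0 ∉ strictPositions ((c + 2) :: l) := by
  simp only [strictPositions, Set.mem_ofPred_eq, mem_descents_cons]
  grind

lemma preimage_succ_strictPositions_cons (c : ℕ) (l : List ℕ) :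
    (· + 1) ⁻¹' strictPositions ((c + 2) :: l) = strictPositions ((c + 1) :: l) := by
  ext k
  simp only [strictPositions, Set.mem_preimage, Set.mem_ofPred_eq, mem_descents_cons]
  grind

end Descents

section Words

variable {n d : ℕ}

/-- The words `j` whose monomials make up a fundamental quasi-symmetric polynomial in the variables
`x_s, x_{s+1}, …`: weakly increasing, with letters at least `s`, and strictly increasing after the
positions in `E`. -/
def IsCompatible (s : ℕ) (E : Set ℕ) (j : Fin d → Fin n) : Prop :=
  (∀ i, s ≤ (j i : ℕ)) ∧ Monotone j ∧ ∀ a b : Fin d, (a : ℕ) + 1 = b → (a : ℕ) ∈ E → j a < j b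

lemma isCompatible_cons {s : ℕ} {E : Set ℕ} {x : Fin n} {j : Fin d → Fin n} :
    IsCompatible s E (Fin.cons x j : Fin (d + 1) → Fin n) ↔
      s ≤ (x : ℕ) ∧ IsCompatible (if 0 ∈ E then x + 1 else x) ((· + 1) ⁻¹' E) j := by
  constructor
  · rintro ⟨hs, hmono, hstrict⟩
    refine ⟨hs 0, fun i => ?_, fun a b hab => hmono (Fin.succ_le_succ_iff.2 hab),
      fun a b hab hE => hstrict a.succ b.succ (by simpa using hab) (by simpa using hE)⟩
    have hfirst : j ⟨0, i.pos⟩ ≤ j i :=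
      hmono (a := Fin.succ ⟨0, i.pos⟩) (b := i.succ) (Fin.succ_le_succ_iff.2 (Nat.zero_le i))
    split_ifs with h0
    · exact (hstrict 0 (Fin.succ ⟨0, i.pos⟩) rfl h0).trans_le hfirst
    · exact hmono (Fin.zero_le i.succ)
  · rintro ⟨hsx, hx, hmono, hstrict⟩
    have hxj : ∀ i, x ≤ j i := fun i => by have := hx i; split_ifs at this <;> omega
    refine ⟨Fin.cases hsx fun i => hsx.trans (hxj i), ?_, ?_⟩
    · refine Fin.cases (fun b _ => ?_) fun a => Fin.cases (by simp) fun b hab => ?_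
      · exact Fin.cases le_rfl hxj b
      · exact hmono (Fin.succ_le_succ_iff.1 hab)
    · refine Fin.cases (Fin.cases (by simp) fun b _ h0 => ?_) fun a =>
        Fin.cases (by simp) fun b hab hE => ?_
      · exact (if_pos (show 0 ∈ E from h0)).symm.trans_le (hx b)
      · exact hstrict a b (by simpa using hab) (by simpa using hE)

end Words

section FundamentalTail

variable (R : Type*) [CommSemiring R] (n : ℕ)

/-- The variable `x_s` of `R[x_0, …, x_{n-1}]`, with the convention `x_s = 0` for `s ≥ n`. -/
noncomputable def truncatedX (s : ℕ) : MvPolynomial (Fin n) R :=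
  if h : s < n then X ⟨s, h⟩ else 0

/-- The sum of the monomials of the words of length `d` that are compatible with `s` and `E`. -/
noncomputable def wordSum (s d : ℕ) (E : Set ℕ) : MvPolynomial (Fin n) R :=
  ∑ j : Fin d → Fin n with IsCompatible s E j, ∏ i, X (j i)

/-- The fundamental quasi-symmetric polynomial in the variables `x_s, …, x_{n-1}` of the composition
whose parts are the entries of `b` plus one; lowering the parts by one makes every list of naturals
a composition. -/
noncomputable def fundamentalTail (s : ℕ) (b : List ℕ) : MvPolynomial (Fin n) R :=
  wordSum R n s (b.map Nat.succ).sum (strictPositions (b.map Nat.succ))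

variable {R n}

lemma sum_X_mul_filter_le (f : ℕ → MvPolynomial (Fin n) R) (s : ℕ) :
    ∑ x : Fin n with s ≤ x.val, X x * f x =
      truncatedX R n s * f s + ∑ x : Fin n with s + 1 ≤ x.val, X x * f x := by
  by_cases h : s < n
  · have hinsert : ({x : Fin n | s ≤ x.val} : Finset (Fin n)) =
        insert ⟨s, h⟩ ({x : Fin n | s + 1 ≤ x.val} : Finset (Fin n)) := by
      ext x
      simp only [Finset.mem_filter_univ, Finset.mem_insert, Fin.ext_iff]
      omega
    rw [hinsert, Finset.sum_insert (by simp), truncatedX, dif_pos h]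
  · have hempty : ∀ t ≥ s, ({x : Fin n | t ≤ x.val} : Finset (Fin n)) = ∅ := fun t ht =>
      Finset.filter_false_of_mem fun x _ => by omega
    rw [hempty s le_rfl, hempty (s + 1) (by omega), truncatedX, dif_neg h]
    simp

@[simp]
lemma wordSum_zero (s : ℕ) (E : Set ℕ) : wordSum R n s 0 E = 1 := by
  simp [wordSum, IsCompatible, Monotone]

lemma wordSum_succ_eq_sum (s d : ℕ) (E : Set ℕ) :
    wordSum R n s (d + 1) E = ∑ x : Fin n with s ≤ x.val,
      X x * wordSum R n (if 0 ∈ E then x + 1 else x) d ((· + 1) ⁻¹' E) := by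
  simp only [wordSum, Finset.sum_filter]
  rw [← (Fin.consEquiv fun _ => Fin n).sum_comp, Fintype.sum_prod_type]
  refine Finset.sum_congr rfl fun x _ => ?_
  have hcons (j : Fin d → Fin n) : IsCompatible s E (Fin.consEquiv (fun _ => Fin n) (x, j)) ↔
      s ≤ x.val ∧ IsCompatible (if 0 ∈ E then x + 1 else x) ((· + 1) ⁻¹' E) j :=
    isCompatible_cons
  simp only [hcons, ite_and, Fin.prod_univ_succ, Fin.consEquiv_apply, Fin.cons_zero,
    Fin.cons_succ]
  split_ifs <;> simp [Finset.mul_sum]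

lemma wordSum_succ (s d : ℕ) (E : Set ℕ) :
    wordSum R n s (d + 1) E =
      truncatedX R n s * wordSum R n (if 0 ∈ E then s + 1 else s) d ((· + 1) ⁻¹' E) +
        wordSum R n (s + 1) (d + 1) E := by
  rw [wordSum_succ_eq_sum, wordSum_succ_eq_sum (s + 1)]
  exact sum_X_mul_filter_le
    (fun t => wordSum R n (if 0 ∈ E then t + 1 else t) d ((· + 1) ⁻¹' E)) s

@[simp]
lemma fundamentalTail_nil (s : ℕ) : fundamentalTail R n s [] = 1 :=
  wordSum_zero _ _

lemma fundamentalTail_zero_cons (s : ℕ) (b : List ℕ) :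
    fundamentalTail R n s (0 :: b) =
      truncatedX R n s * fundamentalTail R n (s + 1) b + fundamentalTail R n (s + 1) (0 :: b) := by
  have hsum : ((0 :: b).map Nat.succ).sum = (b.map Nat.succ).sum + 1 := by
    simp only [List.map_cons, List.sum_cons]
    omega
  simp only [fundamentalTail, hsum]
  rw [wordSum_succ, List.map_cons, preimage_succ_strictPositions_one_cons]
  rcases b with _ | ⟨c, b⟩
  · simp
  · rw [if_pos (zero_mem_strictPositions_one_cons.2 (by simp))]

lemma fundamentalTail_succ_cons (s c : ℕ) (b : List ℕ) :
    fundamentalTail R n s ((c + 1) :: b) =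
      truncatedX R n s * fundamentalTail R n s (c :: b) +
        fundamentalTail R n (s + 1) ((c + 1) :: b) := by
  have hsum : (((c + 1) :: b).map Nat.succ).sum = ((c :: b).map Nat.succ).sum + 1 := by
    simp only [List.map_cons, List.sum_cons]
    omega
  simp only [fundamentalTail, hsum]
  rw [wordSum_succ, List.map_cons, preimage_succ_strictPositions_cons,
    if_neg (zero_notMem_strictPositions_cons _ _), List.map_cons]

lemma fundamentalTail_mem_supported (s : ℕ) (b : List ℕ) :
    fundamentalTail R n s b ∈ supported R {i : Fin n | s ≤ i} :=
  sum_mem fun _ hj => prod_mem fun i _ =>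
    (supported_eq_adjoin_X (R := R) {i : Fin n | s ≤ i}) ▸
      Algebra.subset_adjoin ⟨_, (Finset.mem_filter_univ _ |>.1 hj).1 i, rfl⟩

lemma truncatedX_mem_supported {s t : ℕ} (h : t ≤ s) :
    truncatedX R n s ∈ supported R {i : Fin n | t ≤ i} := by
  unfold truncatedX
  split_ifs
  · rw [supported_eq_adjoin_X]
    exact Algebra.subset_adjoin ⟨_, h, rfl⟩
  · exact zero_mem _

lemma Fpoly_eq_fundamentalTail (b : List ℕ) :
    Fpoly n (b.map Nat.succ).sum (descents (b.map Nat.succ)) = fundamentalTail ℚ n 0 b := by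
  simp [Fpoly, fundamentalTail, wordSum, IsCompatible, strictPositions, Finset.sum_filter]

end FundamentalTail

section GFunctional

variable {A M : Type*} [CommRing A] [AddCommGroup M] [Module A M]

/-- The value at a composition of the family obtained from a family `φ` by removing the variable
`x`: it is set up so that it sends the family of fundamental polynomials in `x_s, x_{s+1}, …` to the
one in `x_{s+1}, …`. Compositions are encoded with parts lowered by one. -/
def removeVar (x : A) : List ℕ → (List ℕ → M) →ₗ[A] M
  | [] => LinearMap.proj []
  | 0 :: b => LinearMap.proj (0 :: b) - x • removeVar x b
  | (c + 1) :: b => LinearMap.proj ((c + 1) :: b) - x • LinearMap.proj (c :: b)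

/-- The linear functional that builds the polynomial `G` of Aval, Bergeron and Bergeron with leading
exponents `l` on the variables `x s, x (s + 1), …` out of a family indexed by compositions. -/
def gFunctional (x : ℕ → A) : ℕ → List ℕ → (List ℕ → M) →ₗ[A] M
  | _, [] => LinearMap.proj []
  | s, 0 :: l => gFunctional x (s + 1) l ∘ₗ LinearMap.pi (removeVar (x s))
  | s, (a + 1) :: l => gFunctional x (s + 1) l ∘ₗ LinearMap.funLeft A M (List.cons a)

section Membership

variable {S : Type*} [SetLike S M] [AddSubgroupClass S M] {N : S} {φ : List ℕ → M}

lemma removeVar_mem_of_forall_mem {x : A} (hx : ∀ y ∈ N, x • y ∈ N) (hφ : ∀ b, φ b ∈ N) :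
    ∀ b, removeVar x b φ ∈ N
  | [] => hφ []
  | 0 :: b => sub_mem (hφ _) (hx _ (removeVar_mem_of_forall_mem hx hφ b))
  | (_ + 1) :: _ => sub_mem (hφ _) (hx _ (hφ _))

lemma gFunctional_mem_of_forall_mem {x : ℕ → A} {s : ℕ} (hx : ∀ i ≥ s, ∀ y ∈ N, x i • y ∈ N)
    (hφ : ∀ b, φ b ∈ N) (l : List ℕ) : gFunctional x s l φ ∈ N := by
  induction l generalizing s φ with
  | nil => exact hφ []
  | cons a l ih =>
    have hx' : ∀ i ≥ s + 1, ∀ y ∈ N, x i • y ∈ N := fun i hi => hx i (by omega)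
    cases a with
    | zero => exact ih hx' (removeVar_mem_of_forall_mem (hx s le_rfl) hφ)
    | succ a => exact ih hx' fun b => hφ (a :: b)

end Membership

end GFunctional

section Catalan

/-- Sequences of type `e`-Catalan: the sum of the first `k` entries is at most `k - 1 + e`. Prefixes
longer than the list impose no further condition. -/
def IsCatalan (e : ℕ) (l : List ℕ) : Prop := ∀ k, 0 < k → (l.take k).sum < k + e

lemma isCatalan_nil (e : ℕ) : IsCatalan e [] := fun k hk => by
  simp only [List.take_nil, List.sum_nil]
  omega

lemma IsCatalan.cons {e a : ℕ} {l : List ℕ} (ha : a ≤ e) (hl : IsCatalan (e + 1 - a) l) :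
    IsCatalan e (a :: l) := by
  rintro (_ | k) hk
  · omega
  · rcases k.eq_zero_or_pos with rfl | hk'
    · simp only [List.take_succ_cons, List.take_zero, List.sum_singleton]
      omega
    · have := hl k hk'
      simp only [List.take_succ_cons, List.sum_cons]
      omega

lemma IsCatalan.sum_Iic_le {n e : ℕ} {a : Fin n → ℕ} (ha : IsCatalan e (List.ofFn a)) (j : Fin n) :
    ∑ i ∈ Finset.Iic j, a i ≤ j + e := by
  have hIic : (Finset.univ.filter fun i : Fin n => (i : ℕ) < j + 1) = Finset.Iic j := by
    ext i
    simp only [Finset.mem_filter_univ, Finset.mem_Iic, Fin.le_def]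
    omega
  have := ha (j + 1) j.val.succ_pos
  rw [List.sum_take_ofFn, hIic] at this
  omega

variable {A M : Type*} [CommRing A] [AddCommGroup M] [Module A M] {J : Submodule A M}
  {φ : List ℕ → M} {e : ℕ}

lemma removeVar_mem_of_lt_sum (x : A) (hφ : ∀ b ≠ [], e ≤ b.sum → φ b ∈ J) :
    ∀ b : List ℕ, e < b.sum → removeVar x b φ ∈ J
  | [], hb => by simp at hb
  | 0 :: b, hb => by
    have hb' : e < b.sum := by simpa using hb
    exact sub_mem (hφ _ (by simp) hb.le)
      (J.smul_mem x (removeVar_mem_of_lt_sum x hφ b hb'))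
  | (c + 1) :: b, hb => by
    have hcb : e ≤ (c :: b).sum := by simp only [List.sum_cons] at hb ⊢; omega
    exact sub_mem (hφ _ (by simp) hb.le) (J.smul_mem x (hφ _ (by simp) hcb))

lemma gFunctional_mem_of_not_isCatalan (x : ℕ → A) (s : ℕ) {l : List ℕ}
    (hφ : ∀ b ≠ [], e ≤ b.sum → φ b ∈ J) (hl : ¬ IsCatalan e l) : gFunctional x s l φ ∈ J := by
  induction l generalizing s e φ with
  | nil => exact absurd (isCatalan_nil e) hl
  | cons a l ih =>
    cases a with
    | zero =>
      refine ih (e := e + 1) (s + 1) (fun b _ hb => removeVar_mem_of_lt_sum (x s) hφ b hb) ?_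
      exact fun hl' => hl (.cons e.zero_le hl')
    | succ a =>
      by_cases hae : a + 1 ≤ e
      · refine ih (e := e - a) (s + 1) (fun b _ hb => hφ _ (by simp) ?_) ?_
        · simp only [List.sum_cons]
          omega
        · exact fun hl' => hl (.cons hae (by convert hl' using 1; omega))
      · exact gFunctional_mem_of_forall_mem (fun i _ y hy => J.smul_mem (x i) hy)
          (fun b => hφ _ (by simp) (by simp only [List.sum_cons]; omega)) l

end Catalan

section GPoly

variable (R : Type*) [CommRing R] (n : ℕ)

/-- The polynomial `G` of Aval, Bergeron and Bergeron: its lexicographic leading exponents on the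
variables `x_s, x_{s+1}, …` are the entries of `l`. -/
noncomputable def gPoly (s : ℕ) (l : List ℕ) : MvPolynomial (Fin n) R :=
  gFunctional (truncatedX R n) s l (fundamentalTail R n s)

/-- The exponent vector of `x_s^{l₀} x_{s+1}^{l₁} ⋯`. -/
noncomputable def exponentFrom (s : ℕ) (l : List ℕ) : Fin n →₀ ℕ :=
  Finsupp.equivFunOnFinite.symm fun i => if s ≤ i then l.getD (i - s) 0 else 0

variable {R n}

lemma removeVar_fundamentalTail (s : ℕ) : ∀ b,
    removeVar (truncatedX R n s) b (fundamentalTail R n s) = fundamentalTail R n (s + 1) b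
  | [] => by simp [removeVar]
  | 0 :: b => by
    simp [removeVar, removeVar_fundamentalTail s b, fundamentalTail_zero_cons s b]
  | (c + 1) :: b => by
    simp [removeVar, fundamentalTail_succ_cons s c b]

lemma gPoly_zero_cons (s : ℕ) (l : List ℕ) : gPoly R n s (0 :: l) = gPoly R n (s + 1) l :=
  congrArg (gFunctional (truncatedX R n) (s + 1) l) (funext (removeVar_fundamentalTail s))

lemma gPoly_succ_cons (s a : ℕ) (l : List ℕ) :
    gPoly R n s ((a + 1) :: l) = truncatedX R n s * gPoly R n s (a :: l) +
      gFunctional (truncatedX R n) (s + 1) l fun b => fundamentalTail R n (s + 1) (a :: b) := by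
  rw [← smul_eq_mul]
  cases a with
  | zero =>
    rw [gPoly_zero_cons, gPoly, gPoly, ← map_smul, ← map_add]
    exact congrArg _ (funext (fundamentalTail_zero_cons s))
  | succ a =>
    change gFunctional _ _ _ _ = _ • gFunctional _ (s + 1) l _ + _
    rw [← map_smul, ← map_add]
    exact congrArg _ (funext (fundamentalTail_succ_cons s a))

@[simp]
lemma exponentFrom_apply (s : ℕ) (l : List ℕ) (i : Fin n) :
    exponentFrom n s l i = if s ≤ i then l.getD (i - s) 0 else 0 := rfl

lemma exponentFrom_zero_cons (s : ℕ) (l : List ℕ) :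
    exponentFrom n s (0 :: l) = exponentFrom n (s + 1) l := by
  ext i
  simp only [exponentFrom_apply]
  rcases lt_trichotomy s i with h | h | h
  · rw [if_pos h.le, if_pos (Nat.succ_le_of_lt h), show (i : ℕ) - s = i - (s + 1) + 1 by omega,
      List.getD_cons_succ]
  · simp [h]
  · rw [if_neg (by omega), if_neg (by omega)]

lemma exponentFrom_succ_cons {s : ℕ} (hs : s < n) (a : ℕ) (l : List ℕ) :
    exponentFrom n s ((a + 1) :: l) = Finsupp.single ⟨s, hs⟩ 1 + exponentFrom n s (a :: l) := by
  ext i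
  simp only [Finsupp.add_apply, exponentFrom_apply, Finsupp.single_apply, Fin.ext_iff]
  rcases lt_trichotomy s i with h | h | h
  · rw [if_neg h.ne, show (i : ℕ) - s = i - (s + 1) + 1 by omega]
    simp
  · simp [h, add_comm]
  · rw [if_neg h.ne', if_neg (by omega), if_neg (by omega)]

lemma exponentFrom_zero_ofFn (μ : Fin n →₀ ℕ) : exponentFrom n 0 (List.ofFn μ) = μ := by
  ext i
  simp

lemma degree_lt_exponentFrom_of_mem_supported {s : ℕ} (hs : s < n) (a : ℕ) (l : List ℕ)
    {p : MvPolynomial (Fin n) R} (hp : p ∈ supported R {i : Fin n | s + 1 ≤ i}) :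
    MonomialOrder.lex.degree p ≺[MonomialOrder.lex] exponentFrom n s ((a + 1) :: l) := by
  have hlt : ∀ ν : Fin n →₀ ℕ, (∀ i : Fin n, (i : ℕ) ≤ s → ν i = 0) →
      ν ≺[MonomialOrder.lex] exponentFrom n s ((a + 1) :: l) := fun ν hν => by
    rw [MonomialOrder.lex_lt_iff, Finsupp.Lex.lt_iff]
    refine ⟨⟨s, hs⟩, fun i hi => ?_, ?_⟩
    · have his : (i : ℕ) < s := hi
      simp [hν i his.le, his.not_ge]
    · simp [hν ⟨s, hs⟩ le_rfl]
  have h0 := hlt 0 fun _ _ => rfl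
  rw [MonomialOrder.degree_lt_iff (by simpa using h0)]
  refine fun ν hν => hlt ν fun i hi => ?_
  by_contra hne
  have hmem := mem_supported.1 hp
    ((mem_vars_iff_mem_support i).2 ⟨ν, hν, Finsupp.mem_support_iff.2 hne⟩)
  exact absurd hi (Nat.not_le.2 hmem)

lemma monic_X_mul_add_and_degree [Nontrivial R] {σ : Type*} {m : MonomialOrder σ} {i : σ}
    {p q : MvPolynomial σ R} (hp : m.Monic p)
    (hq : m.degree q ≺[m] Finsupp.single i 1 + m.degree p) :
    m.Monic (X i * p + q) ∧ m.degree (X i * p + q) = Finsupp.single i 1 + m.degree p := by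
  have hX : m.Monic (X i : MvPolynomial σ R) := MonomialOrder.monic_X
  have hdeg : m.degree (X i * p) = Finsupp.single i 1 + m.degree p := by
    rw [MonomialOrder.degree_mul_of_left_mem_nonZeroDivisors (by simp)
      hp.ne_zero, MonomialOrder.degree_X]
  rw [← hdeg] at hq
  exact ⟨(hX.mul hp).add_of_lt hq, by rw [MonomialOrder.degree_add_of_lt hq, hdeg]⟩

lemma monic_gPoly_and_degree [Nontrivial R] {s : ℕ} {l : List ℕ} (hl : s + l.length = n) :
    MonomialOrder.lex.Monic (gPoly R n s l) ∧
      MonomialOrder.lex.degree (gPoly R n s l) = exponentFrom n s l := by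
  induction l generalizing s with
  | nil =>
    have hone : gPoly R n s [] = 1 := fundamentalTail_nil s
    have hexp : exponentFrom n s [] = 0 := by ext; simp
    rw [hone, hexp]
    exact ⟨MonomialOrder.monic_one, MonomialOrder.degree_one⟩
  | cons a l ih =>
    rw [List.length_cons] at hl
    have hs : s < n := by omega
    induction a with
    | zero =>
      rw [gPoly_zero_cons, exponentFrom_zero_cons]
      exact ih (by omega)
    | succ a iha =>
      obtain ⟨hmonic, hdeg⟩ := iha
      have htail : gFunctional (truncatedX R n) (s + 1) l
            (fun b => fundamentalTail R n (s + 1) (a :: b)) ∈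
          supported R {i : Fin n | s + 1 ≤ i} :=
        gFunctional_mem_of_forall_mem
          (fun i hi y hy => mul_mem (truncatedX_mem_supported hi) hy)
          (fun b => fundamentalTail_mem_supported (s + 1) (a :: b)) l
      have hlt := degree_lt_exponentFrom_of_mem_supported hs a l htail
      rw [exponentFrom_succ_cons hs, ← hdeg] at hlt ⊢
      rw [gPoly_succ_cons, truncatedX, dif_pos hs]
      exact monic_X_mul_add_and_degree hmonic hlt

end GPoly

section Spanning

lemma span_mk_monomial_eq_top {σ R : Type*} [CommRing R] {m : MonomialOrder σ}
    {I : Ideal (MvPolynomial σ R)} {S : Set (σ →₀ ℕ)}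
    (hI : ∀ μ ∉ S, ∃ p ∈ I, IsUnit (m.leadingCoeff p) ∧ m.degree p = μ) :
    Submodule.span R (Set.range fun μ : S => Ideal.Quotient.mkₐ R I (monomial μ 1)) = ⊤ := by
  rw [eq_top_iff]
  rintro y -
  obtain ⟨p, rfl⟩ := Ideal.Quotient.mkₐ_surjective R I y
  obtain ⟨g, r, rfl, -, hr⟩ := m.div_set (B := {b | b ∈ I ∧ IsUnit (m.leadingCoeff b)})
    (fun b hb => hb.2) p
  have hdiv : Ideal.Quotient.mkₐ R I (Finsupp.linearCombination _ Subtype.val g) = 0 :=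
    Ideal.Quotient.eq_zero_iff_mem.2
      (Submodule.sum_mem _ fun b _ => I.mul_mem_left _ b.2.1)
  rw [map_add, hdiv, zero_add, ← support_sum_monomial_coeff r, map_sum]
  refine Submodule.sum_mem _ fun μ hμ => ?_
  have hμS : μ ∈ S := by
    by_contra hμS
    obtain ⟨b, hbI, hunit, hdeg⟩ := hI μ hμS
    exact hr μ hμ b ⟨hbI, hunit⟩ hdeg.le
  rw [← mul_one (r.coeff μ), ← smul_eq_mul, ← smul_monomial, map_smul]
  exact Submodule.smul_mem _ _ (Submodule.subset_span ⟨⟨μ, hμS⟩, rfl⟩)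

lemma fundamentalTail_mem_Jne {n e : ℕ} {b : List ℕ} (hb : b ≠ []) (he : e ≤ b.sum) :
    fundamentalTail ℚ n 0 b ∈ Jne n e := by
  refine Ideal.subset_span ⟨b.map Nat.succ, by simp, ⟨b.length, List.length_pos_iff.2 hb, ?_⟩,
    (Fpoly_eq_fundamentalTail b).symm⟩
  have hsum : (b.map Nat.succ).sum = b.sum + b.length := by
    change (b.map fun a => a + 1).sum = _
    rw [List.sum_map_add]
    simp
  rw [List.take_of_length_le (by simp), hsum]
  omega

lemma rank_quotient_Jne_le (n e : ℕ) :
    Module.rank ℚ (MvPolynomial (Fin n) ℚ ⧸ Jne n e) ≤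
      Cardinal.mk {μ : Fin n →₀ ℕ | IsCatalan e (List.ofFn μ)} := by
  have hspan := span_mk_monomial_eq_top (m := MonomialOrder.lex) (I := Jne n e)
    (S := {μ : Fin n →₀ ℕ | IsCatalan e (List.ofFn μ)}) fun μ hμ => by
      obtain ⟨hmonic, hdeg⟩ := monic_gPoly_and_degree (R := ℚ) (n := n) (s := 0)
        (l := List.ofFn μ) (by simp)
      refine ⟨gPoly ℚ n 0 (List.ofFn μ), ?_, ?_, hdeg.trans (exponentFrom_zero_ofFn μ)⟩
      · exact gFunctional_mem_of_not_isCatalan _ 0 (fun b => fundamentalTail_mem_Jne) hμ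
      · simp [hmonic.leadingCoeff_eq_one]
  rw [← rank_top, ← hspan]
  exact (rank_span_le _).trans Cardinal.mk_range_le

end Spanning

section LatticePaths

variable {n e N : ℕ}

/-- The lattice paths from `(0,0)` to `(n+e,n)` weakly above `y = x - e`, as sequences of steps with
`true` for north and `false` for east. -/
def IsLatticePath (n e : ℕ) (f : Fin (2 * n + e) → Bool) : Prop :=
  (Finset.univ.filter fun i => f i = true).card = n ∧
    ∀ m, m ≤ 2 * n + e →
      (Finset.univ.filter fun i : Fin (2 * n + e) => (i : ℕ) < m ∧ f i = false).card ≤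
        (Finset.univ.filter fun i : Fin (2 * n + e) => (i : ℕ) < m ∧ f i = true).card + e

/-- The sequence of `N` steps whose north steps are those at the positions `p j`. -/
noncomputable def pathOfNorthSteps (p : Fin n → Fin N) (i : Fin N) : Bool :=
  decide (i ∈ Set.range p)

lemma card_filter_false_add_card_filter_true (f : Fin N → Bool) {m : ℕ} (hm : m ≤ N) :
    (Finset.univ.filter fun i : Fin N => (i : ℕ) < m ∧ f i = false).card +
      (Finset.univ.filter fun i : Fin N => (i : ℕ) < m ∧ f i = true).card = m := by
  have h := Finset.card_filter_add_card_filter_not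
    (s := Finset.univ.filter fun i : Fin N => (i : ℕ) < m) fun i => f i = false
  simpa only [Finset.filter_filter, Bool.not_eq_false, Fin.card_filter_val_lt, min_eq_right hm]
    using h

lemma card_filter_pathOfNorthSteps {p : Fin n → Fin N} (hp : p.Injective) (m : ℕ) :
    (Finset.univ.filter fun i : Fin N => (i : ℕ) < m ∧ pathOfNorthSteps p i = true).card =
      (Finset.univ.filter fun j : Fin n => (p j : ℕ) < m).card := by
  rw [← Finset.card_image_of_injective _ hp]
  congr 1
  ext i
  simp only [pathOfNorthSteps, decide_eq_true_eq, Set.mem_range, Finset.mem_filter_univ,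
    Finset.mem_image]
  grind

lemma le_two_mul_card_filter_lt_add {p : Fin n → ℕ} (hp : Monotone p)
    (hpe : ∀ j, p j ≤ 2 * j + e) {m : ℕ} (hm : m ≤ 2 * n + e) :
    m ≤ 2 * (Finset.univ.filter fun j : Fin n => p j < m).card + e := by
  set t := (Finset.univ.filter fun j : Fin n => p j < m).card
  by_contra! hlt
  have htn : t < n := by omega
  have hsub : Finset.Iic (⟨t, htn⟩ : Fin n) ⊆ Finset.univ.filter fun j : Fin n => p j < m :=
    fun j hj => (Finset.mem_filter_univ j).2 <| calc
      p j ≤ p ⟨t, htn⟩ := hp (Finset.mem_Iic.1 hj)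
      _ ≤ 2 * t + e := hpe _
      _ < m := hlt
  have hcard : t + 1 ≤ t := by simpa only [Fin.card_Iic] using Finset.card_le_card hsub
  omega

lemma isLatticePath_pathOfNorthSteps {p : Fin n → Fin (2 * n + e)} (hp : StrictMono p)
    (hpe : ∀ j, (p j : ℕ) ≤ 2 * j + e) : IsLatticePath n e (pathOfNorthSteps p) := by
  refine ⟨?_, fun m hm => ?_⟩
  · simpa using card_filter_pathOfNorthSteps hp.injective (2 * n + e)
  · have hsplit := card_filter_false_add_card_filter_true (pathOfNorthSteps p) hm
    have hle := le_two_mul_card_filter_lt_add (p := fun j => (p j : ℕ)) hp.monotone hpe hm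
    rw [card_filter_pathOfNorthSteps hp.injective] at hsplit ⊢
    omega

lemma pathOfNorthSteps_inj {p q : Fin n → Fin N} (hp : StrictMono p) (hq : StrictMono q) :
    pathOfNorthSteps p = pathOfNorthSteps q ↔ p = q := by
  refine ⟨fun h => (hp.range_inj hq).1 (Set.ext fun i => ?_), congrArg _⟩
  simpa only [pathOfNorthSteps, decide_eq_decide] using congrFun h i

/-- The position of the `j`-th north step of the path that makes `a i` east steps right before its
`i`-th north step. -/
def northStep (a : Fin n → ℕ) (j : Fin n) : ℕ := ∑ i ∈ Finset.Iic j, a i + j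

lemma northStep_strictMono (a : Fin n → ℕ) : StrictMono (northStep a) := fun _ _ hij =>
  add_lt_add_of_le_of_lt (Finset.sum_le_sum_of_subset (Finset.Iic_subset_Iic.2 hij.le)) hij

lemma northStep_injective : Function.Injective (northStep (n := n)) := by
  intro a b hab
  funext j
  induction j using WellFoundedLT.induction with
  | ind j ih =>
    have hIio : ∑ i ∈ Finset.Iio j, a i = ∑ i ∈ Finset.Iio j, b i :=
      Finset.sum_congr rfl fun i hi => ih i (Finset.mem_Iio.1 hi)
    have hIic := congrFun hab j
    simp only [northStep, ← Finset.sum_Iio_add_eq_sum_Iic] at hIic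
    omega

lemma IsCatalan.northStep_le {a : Fin n → ℕ} (ha : IsCatalan e (List.ofFn a)) (j : Fin n) :
    northStep a j ≤ 2 * j + e := by
  have := ha.sum_Iic_le j
  unfold northStep
  omega

/-- The north steps of a sequence of type `e`-Catalan, as positions in a path of length
`2 * n + e`. -/
def IsCatalan.northSteps {a : Fin n → ℕ} (ha : IsCatalan e (List.ofFn a)) (j : Fin n) :
    Fin (2 * n + e) :=
  ⟨northStep a j, by have := ha.northStep_le j; omega⟩

lemma IsCatalan.northSteps_strictMono {a : Fin n → ℕ} (ha : IsCatalan e (List.ofFn a)) :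
    StrictMono ha.northSteps := northStep_strictMono a

lemma exists_injective_isCatalan_isLatticePath (n e : ℕ) :
    ∃ g : {μ : Fin n →₀ ℕ | IsCatalan e (List.ofFn μ)} → {f // IsLatticePath n e f},
      Function.Injective g := by
  refine ⟨fun μ => ⟨pathOfNorthSteps (IsCatalan.northSteps μ.2), isLatticePath_pathOfNorthSteps
    (IsCatalan.northSteps_strictMono μ.2) (IsCatalan.northStep_le μ.2)⟩, fun μ ν h => ?_⟩
  have hsteps : IsCatalan.northSteps μ.2 = IsCatalan.northSteps ν.2 :=
    (pathOfNorthSteps_inj (IsCatalan.northSteps_strictMono μ.2)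
      (IsCatalan.northSteps_strictMono ν.2)).1 (congrArg Subtype.val h)
  exact Subtype.ext <| DFunLike.coe_injective <| northStep_injective <|
    funext fun j => congrArg Fin.val (congrFun hsteps j)

end LatticePaths

end QuasisymmetricQuotient

/-- For every `e ≥ 0` and `n ≥ 1`, `dim_ℚ R_n^(e) ≤ C_n^(e)`, where
`R_n^(e) = ℚ[x₁,…,x_n]/J_n^(e)` and `C_n^(e)` is the number of lattice paths from
`(0,0)` to `(n+e,n)` with unit east/north steps staying weakly above the line
`y = x - e` (paths encoded as Boolean sequences: `true` = north, `false` = east, with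
`n` north steps and every prefix satisfying `#east ≤ #north + e`). -/
theorem Rne_dim_le (n e : ℕ) (hn : 1 ≤ n) :
    Module.rank ℚ (MvPolynomial (Fin n) ℚ ⧸ Jne n e) ≤
      (Nat.card {f : Fin (2 * n + e) → Bool //
        (Finset.univ.filter fun i => f i = true).card = n ∧
        ∀ m, m ≤ 2 * n + e →
          (Finset.univ.filter fun i : Fin (2 * n + e) => (i : ℕ) < m ∧ f i = false).card ≤
          (Finset.univ.filter fun i : Fin (2 * n + e) => (i : ℕ) < m ∧ f i = true).card
            + e} : Cardinal) := by
  obtain ⟨g, hg⟩ := QuasisymmetricQuotient.exists_injective_isCatalan_isLatticePath n e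
  calc
    _ ≤ Cardinal.mk {μ : Fin n →₀ ℕ | QuasisymmetricQuotient.IsCatalan e (List.ofFn μ)} :=
      QuasisymmetricQuotient.rank_quotient_Jne_le n e
    _ ≤ Cardinal.mk {f // QuasisymmetricQuotient.IsLatticePath n e f} :=
      Cardinal.mk_le_of_injective hg
    _ = _ := (Nat.cast_card).symm
end
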